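/- arXiv:2109.09070 — 2 statements merged into one kernel-verified Lean document; each statement's English description precedes it below -/
import Mathlib

section
/- Fix α ≥ 0. For all t > 0 and x, y ≥ 0, the squared Bessel transition density has the integral representation (for x > 0): q_t(x,y) = (y/x)^{α/2} ∫_0^∞ e^{-2tz} J_α(2√(zx)) J_α(2√(zy)) dz, where J_α is the Bessel function of the first kind. -/
open MeasureTheory

/-- The modified Bessel function of the first kind,
`I_α(z) = ∑_{n≥0} (z/2)^{2n+α}/(n! Γ(n+α+1))`. -/
noncomputable def Ib (α z : ℝ) : ℝ :=
  ∑' n : ℕ, (z / 2) ^ (2 * (n : ℝ) + α) / ((n.factorial : ℝ) * Real.Gamma ((n : ℝ) + α + 1))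

/-- The Bessel function of the first kind,
`J_α(z) = ∑_{n≥0} (-1)^n (z/2)^{2n+α}/(n! Γ(n+α+1))`. -/
noncomputable def Jb (α z : ℝ) : ℝ :=
  ∑' n : ℕ,
    (-1 : ℝ) ^ n * (z / 2) ^ (2 * (n : ℝ) + α) / ((n.factorial : ℝ) * Real.Gamma ((n : ℝ) + α + 1))

/-- The squared Bessel transition density of index `α` (for `x > 0`):
`q_t(x,y) = (2t)⁻¹ (y/x)^{α/2} e^{-(x+y)/(2t)} I_α(√(xy)/t)`. -/
noncomputable def qI (α t x y : ℝ) : ℝ :=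
  (2 * t)⁻¹ * (y / x) ^ (α / 2) * Real.exp (-(x + y) / (2 * t)) * Ib α (Real.sqrt (x * y) / t)

lemma Gpos (α : ℝ) (hα : 0 ≤ α) (n : ℕ) : 0 < Real.Gamma ((n : ℝ) + α + 1) :=
  Real.Gamma_pos_of_pos (by positivity)

lemma vand (m : ℕ) : ∀ (n : ℕ) (α : ℝ), 0 ≤ α →
    ∑ k ∈ Finset.range (m + 1), (m.choose k : ℝ) * (n.descFactorial k : ℝ) / Real.Gamma ((k : ℝ) + α + 1)
    = Real.Gamma ((m : ℝ) + n + α + 1) / (Real.Gamma ((m : ℝ) + α + 1) * Real.Gamma ((n : ℝ) + α + 1)) := by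
  induction m with
  | zero =>
    intro n α hα
    have h1 := (Gpos α hα n).ne'
    have h0 := (Gpos α hα 0).ne'
    simp at h0 ⊢
    field_simp
  | succ m ih =>
    intro n α hα
    have key : ∑ k ∈ Finset.range (m + 1 + 1), ((m+1).choose k : ℝ) * (n.descFactorial k : ℝ) / Real.Gamma ((k : ℝ) + α + 1)
      = (∑ k ∈ Finset.range (m + 1), (m.choose k : ℝ) * (n.descFactorial k : ℝ) / Real.Gamma ((k : ℝ) + α + 1))
       + ∑ k ∈ Finset.range (m + 1), (m.choose k : ℝ) * (n.descFactorial (k+1) : ℝ) / Real.Gamma ((k : ℝ) + (α + 1) + 1) := by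
      have e : ∑ k ∈ Finset.range (m + 1), (m.choose k : ℝ) * (n.descFactorial k : ℝ) / Real.Gamma ((k : ℝ) + α + 1)
        = ∑ k ∈ Finset.range (m + 1 + 1), (m.choose k : ℝ) * (n.descFactorial k : ℝ) / Real.Gamma ((k : ℝ) + α + 1) := by
        rw [Finset.sum_range_succ _ (m+1)]; simp
      rw [e, Finset.sum_range_succ' _ (m+1), Finset.sum_range_succ' _ (m+1), add_right_comm (Finset.sum _ _),
        ← Finset.sum_add_distrib]
      congr 1
      · refine Finset.sum_congr rfl fun k _ => ?_
        rw [Nat.choose_succ_succ, show ((k:ℝ) + (α+1) + 1) = ((k+1 : ℕ) : ℝ) + α + 1 by push_cast; ring]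
        push_cast
        ring
      · simp
    rw [key, ih n α hα]
    have g1 := (Gpos α hα m).ne'
    have g2 := (Gpos α hα n).ne'
    have e1 : Real.Gamma (((m+1:ℕ):ℝ) + α + 1) = ((m:ℝ) + α + 1) * Real.Gamma ((m:ℝ) + α + 1) := by
      rw [← Real.Gamma_add_one (by positivity)]; congr 1; push_cast; ring
    have e2 : Real.Gamma (((m+1:ℕ):ℝ) + n + α + 1) = ((m:ℝ) + n + α + 1) * Real.Gamma ((m:ℝ) + n + α + 1) := by
      rw [← Real.Gamma_add_one (by positivity)]; congr 1; push_cast; ring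
    have hm : (m:ℝ) + α + 1 ≠ 0 := by positivity
    rw [e1, e2]
    cases n with
    | zero =>
      simp only [Nat.zero_descFactorial_succ]
      simp
      simp at g2
      field_simp
    | succ n =>
      simp only [Nat.succ_descFactorial_succ]
      have := ih n (α + 1) (by linarith)
      have h3 : ∑ k ∈ Finset.range (m + 1), (m.choose k : ℝ) * (((n+1) * n.descFactorial k : ℕ) : ℝ) / Real.Gamma ((k : ℝ) + (α + 1) + 1)
        = (n+1 : ℝ) * ∑ k ∈ Finset.range (m + 1), (m.choose k : ℝ) * (n.descFactorial k : ℝ) / Real.Gamma ((k : ℝ) + (α + 1) + 1) := by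
        rw [Finset.mul_sum]
        refine Finset.sum_congr rfl fun k _ => ?_
        push_cast; ring
      rw [h3, this]
      rw [show (m:ℝ) + n + (α+1) + 1 = (m:ℝ) + ((n+1:ℕ):ℝ) + α + 1 by push_cast; ring,
        show (m:ℝ) + (α+1) + 1 = ((m+1:ℕ):ℝ) + α + 1 by push_cast; ring,
        show (n:ℝ) + (α+1) + 1 = ((n+1:ℕ):ℝ) + α + 1 by push_cast; ring, e1]
      field_simp
      push_cast
      ring

lemma hasSum_desc (X : ℝ) (k : ℕ) :
    HasSum (fun m : ℕ => X ^ m * (m.descFactorial k : ℝ) / (m.factorial : ℝ)) (X ^ k * Real.exp X) := by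
  have h := (NormedSpace.expSeries_div_hasSum_exp X).mul_left (X ^ k)
  rw [← Real.exp_eq_exp_ℝ] at h
  rw [← hasSum_nat_add_iff' k, Finset.sum_eq_zero, sub_zero]
  · refine (congrArg (fun f => HasSum f (X ^ k * Real.exp X)) (funext fun i => ?_)).mpr h
    have h1 : ((i.factorial : ℝ)) * ((i + k).descFactorial k : ℝ) = ((i+k).factorial : ℝ) := by
      have := Nat.factorial_mul_descFactorial (n := i + k) (k := k) (by omega)
      rw [Nat.add_sub_cancel] at this
      exact_mod_cast this
    rw [← h1]
    have h2 : (i.factorial : ℝ) ≠ 0 := by positivity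
    have h3 : ((i + k).descFactorial k : ℝ) ≠ 0 := by
      intro h; rw [h] at h1; rw [mul_zero] at h1; exact Nat.factorial_ne_zero (i + k) (by exact_mod_cast h1.symm)
    field_simp
    ring
  · intro i hi
    rw [Nat.descFactorial_eq_zero_iff_lt.2 (Finset.mem_range.1 hi)]; simp

lemma Gmono (α : ℝ) (hα : 0 ≤ α) (n : ℕ) : Real.Gamma (α + 1) ≤ Real.Gamma ((n : ℝ) + α + 1) := by
  induction n with
  | zero => simp
  | succ n ih =>
    have : Real.Gamma (((n+1:ℕ):ℝ) + α + 1) = ((n:ℝ) + α + 1) * Real.Gamma ((n:ℝ) + α + 1) := by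
      rw [← Real.Gamma_add_one (by positivity)]; congr 1; push_cast; ring
    rw [this]
    have := Gpos α hα n
    have h2 : (0:ℝ) ≤ n := by positivity
    nlinarith [mul_nonneg (add_nonneg h2 hα) this.le]

lemma summ_norm (α : ℝ) (hα : 0 ≤ α) (w : ℝ) :
    Summable fun n : ℕ => ‖w ^ n / ((n.factorial : ℝ) * Real.Gamma ((n : ℝ) + α + 1))‖ := by
  have h := ((NormedSpace.expSeries_div_hasSum_exp |w|).summable).mul_right (1 / Real.Gamma (α + 1))
  refine h.of_nonneg_of_le (fun _ => norm_nonneg _) fun n => ?_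
  have h0 := Gpos α hα 0
  have h1 := Gpos α hα n
  simp at h0
  rw [norm_div, norm_pow, Real.norm_eq_abs, Real.norm_of_nonneg (by positivity), div_mul_div_comm, mul_one]
  gcongr
  exact Gmono α hα n

lemma G_summ (α : ℝ) (hα : 0 ≤ α) (X Y : ℝ) :
    Summable fun q : ℕ × (ℕ × ℕ) => 1 / ((q.1.factorial : ℝ) * Real.Gamma ((q.1 : ℝ) + α + 1)) *
      ((X ^ q.2.1 * (q.2.1.descFactorial q.1 : ℝ) / (q.2.1.factorial : ℝ)) *
      (Y ^ q.2.2 * (q.2.2.descFactorial q.1 : ℝ) / (q.2.2.factorial : ℝ))) := by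
  apply Summable.of_norm
  have e : ∀ k m : ℕ, ∀ X : ℝ, ‖X ^ m * (m.descFactorial k : ℝ) / (m.factorial : ℝ)‖ = |X| ^ m * (m.descFactorial k : ℝ) / (m.factorial : ℝ) := by
    intro k m X
    simp
  have e0 : ∀ k : ℕ, ‖1 / ((k.factorial : ℝ) * Real.Gamma ((k : ℝ) + α + 1))‖ = 1 / ((k.factorial : ℝ) * Real.Gamma ((k : ℝ) + α + 1)) := by
    intro k
    have := Gpos α hα k
    exact Real.norm_of_nonneg (by positivity)
  simp only [norm_mul, e, e0]
  have hh : ∀ k : ℕ, HasSum (fun y : ℕ × ℕ => 1 / ((k.factorial : ℝ) * Real.Gamma ((k : ℝ) + α + 1)) *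
      ((|X| ^ y.1 * (y.1.descFactorial k : ℝ) / (y.1.factorial : ℝ)) *
      (|Y| ^ y.2 * (y.2.descFactorial k : ℝ) / (y.2.factorial : ℝ)))) (1 / ((k.factorial : ℝ) * Real.Gamma ((k : ℝ) + α + 1)) *
        ((|X| ^ k * Real.exp |X|) * (|Y| ^ k * Real.exp |Y|))) := by
    intro k
    refine HasSum.mul_left _ ((hasSum_desc |X| k).mul (hasSum_desc |Y| k) ?_)
    exact (hasSum_desc |X| k).summable.mul_of_nonneg (hasSum_desc |Y| k).summable
      (fun _ => by positivity) (fun _ => by positivity)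
  rw [summable_prod_of_nonneg]
  · refine ⟨fun k => (hh k).summable, ?_⟩
    simp only [fun k => (hh k).tsum_eq]
    refine ((summ_norm α hα (|X| * |Y|)).of_norm.mul_right (Real.exp |X| * Real.exp |Y|)).congr fun k => ?_
    rw [mul_pow]; ring
  · intro q
    have := Gpos α hα q.1
    simp only [Pi.zero_apply]
    positivity

noncomputable def TT (α X Y : ℝ) (q : ℕ × ℕ) : ℝ :=
  X ^ q.1 * Y ^ q.2 * Real.Gamma ((q.1 : ℝ) + q.2 + α + 1) /
    ((q.1.factorial : ℝ) * Real.Gamma ((q.1 : ℝ) + α + 1) * ((q.2.factorial : ℝ) * Real.Gamma ((q.2 : ℝ) + α + 1)))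

lemma TT_hasSum (α : ℝ) (hα : 0 ≤ α) (X Y : ℝ) :
    HasSum (TT α X Y) (Real.exp (X + Y) *
      ∑' k : ℕ, (X * Y) ^ k / ((k.factorial : ℝ) * Real.Gamma ((k : ℝ) + α + 1))) := by
  have hs := G_summ α hα X Y
  have h1 := hs.hasSum.prod_fiberwise (g := fun k : ℕ => ((X * Y) ^ k / ((k.factorial : ℝ) * Real.Gamma ((k : ℝ) + α + 1))) * Real.exp (X + Y)) (by
    intro k
    have h2 := HasSum.mul_left (1 / ((k.factorial : ℝ) * Real.Gamma ((k : ℝ) + α + 1))) ((hasSum_desc X k).mul (hasSum_desc Y k) (by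
      exact summable_mul_of_summable_norm (hasSum_desc X k).summable.norm (hasSum_desc Y k).summable.norm))
    have h5 : 1 / ((k.factorial : ℝ) * Real.Gamma ((k : ℝ) + α + 1)) *
        (X ^ k * Real.exp X * (Y ^ k * Real.exp Y)) =
        ((X * Y) ^ k / ((k.factorial : ℝ) * Real.Gamma ((k : ℝ) + α + 1))) * Real.exp (X + Y) := by
      rw [mul_pow, Real.exp_add]; ring
    rw [h5] at h2
    exact h2)
  rw [mul_comm, ← tsum_mul_right, h1.tsum_eq]
  have h3 := ((Equiv.prodComm (ℕ × ℕ) ℕ).hasSum_iff).2 hs.hasSum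
  refine h3.prod_fiberwise fun q => ?_
  obtain ⟨m, n⟩ := q
  have hv := vand m n α hα
  have : TT α X Y (m, n) = ∑ k ∈ Finset.range (m+1), 1 / ((k.factorial : ℝ) * Real.Gamma ((k : ℝ) + α + 1)) *
      ((X ^ m * (m.descFactorial k : ℝ) / (m.factorial : ℝ)) *
      (Y ^ n * (n.descFactorial k : ℝ) / (n.factorial : ℝ))) := by
    have : TT α X Y (m, n) = (X ^ m * Y ^ n / (m.factorial * n.factorial)) * (Real.Gamma ((m : ℝ) + n + α + 1) / (Real.Gamma ((m : ℝ) + α + 1) * Real.Gamma ((n : ℝ) + α + 1))) := by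
      simp only [TT]
      have := (Gpos α hα m).ne'
      have := (Gpos α hα n).ne'
      field_simp
    rw [this, ← hv, Finset.mul_sum]
    refine Finset.sum_congr rfl fun k _ => ?_
    have h4 : (m.descFactorial k : ℝ) = k.factorial * m.choose k := by
      exact_mod_cast Nat.descFactorial_eq_factorial_mul_choose m k
    rw [h4]
    have := (Gpos α hα k).ne'
    field_simp
  rw [this]
  apply hasSum_sum_of_ne_finset_zero
  intro k hk
  have : m.descFactorial k = 0 := Nat.descFactorial_eq_zero_iff_lt.2 (by simpa using hk)
  simp [this]

lemma rpow_split (α : ℝ) (hα : 0 ≤ α) (s : ℝ) (hs : 0 ≤ s) (n : ℕ) :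
    s ^ (2 * (n : ℝ) + α) = s ^ α * (s ^ 2) ^ n := by
  rw [Real.rpow_add_of_nonneg hs (by positivity) hα, mul_comm, ← pow_mul, ← Real.rpow_natCast s (2 * n)]
  push_cast; rfl

lemma Jb_eq (α : ℝ) (hα : 0 ≤ α) (w : ℝ) (hw : 0 ≤ w) :
    Jb α (2 * Real.sqrt w) = Real.sqrt w ^ α *
      ∑' n : ℕ, (-w) ^ n / ((n.factorial : ℝ) * Real.Gamma ((n : ℝ) + α + 1)) := by
  unfold Jb
  rw [← tsum_mul_left]
  congr 1; ext n
  rw [mul_div_cancel_left₀ _ (two_ne_zero), rpow_split α hα _ (Real.sqrt_nonneg _), Real.sq_sqrt hw,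
    neg_pow w]
  ring

lemma Ib_eq (α : ℝ) (hα : 0 ≤ α) (t : ℝ) (ht : 0 < t) (x y : ℝ) (hx : 0 ≤ x) (hy : 0 ≤ y) :
    Ib α (Real.sqrt (x * y) / t) = (1 / (2 * t)) ^ α * (Real.sqrt x ^ α * Real.sqrt y ^ α) *
      ∑' n : ℕ, ((-x / (2 * t)) * (-y / (2 * t))) ^ n / ((n.factorial : ℝ) * Real.Gamma ((n : ℝ) + α + 1)) := by
  unfold Ib
  rw [← tsum_mul_left]
  congr 1; ext n
  have e : Real.sqrt (x * y) / t / 2 = 1 / (2 * t) * (Real.sqrt x * Real.sqrt y) := by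
    rw [Real.sqrt_mul hx]; field_simp
  rw [e, rpow_split α hα _ (by positivity), Real.mul_rpow (by positivity) (by positivity),
    Real.mul_rpow (by positivity) (by positivity)]
  have : (1 / (2 * t) * (Real.sqrt x * Real.sqrt y)) ^ 2 = (-x / (2 * t)) * (-y / (2 * t)) := by
    rw [mul_pow, mul_pow, Real.sq_sqrt hx, Real.sq_sqrt hy]; field_simp
  rw [this]; ring

lemma gam_int (a p : ℝ) (ha : 0 < a) (hp : 0 < p) :
    IntegrableOn (fun z : ℝ => z ^ (a - 1) * Real.exp (-(p * z))) (Set.Ioi 0) := by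
  by_contra h
  have h1 := Real.integral_rpow_mul_exp_neg_mul_Ioi ha hp
  rw [integral_undef h] at h1
  have := Real.Gamma_pos_of_pos ha
  have : 0 < (1 / p) ^ a * Real.Gamma a := by positivity
  linarith

lemma TT_scale (α p x y : ℝ) (hp : 0 < p) (q : ℕ × ℕ) :
    (1 / p) ^ ((q.1 : ℝ) + q.2 + α + 1) * Real.Gamma ((q.1 : ℝ) + q.2 + α + 1) *
      ((x ^ q.1 / ((q.1.factorial : ℝ) * Real.Gamma ((q.1 : ℝ) + α + 1))) *
       (y ^ q.2 / ((q.2.factorial : ℝ) * Real.Gamma ((q.2 : ℝ) + α + 1))))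
    = (1 / p) ^ (α + 1) * TT α (x / p) (y / p) q := by
  have h : (0:ℝ) < 1 / p := by positivity
  rw [add_assoc, Real.rpow_add h, Real.rpow_add h, Real.rpow_natCast, Real.rpow_natCast]
  simp only [TT, div_pow, one_pow, add_assoc]
  ring

/-- Integral representation of the squared Bessel transition density:
`q_t(x,y) = (y/x)^{α/2} ∫_0^∞ e^{-2tz} J_α(2√(zx)) J_α(2√(zy)) dz` for `x > 0`. -/
theorem stmt7 (α : ℝ) (hα : 0 ≤ α) (t : ℝ) (ht : 0 < t) (x y : ℝ) (hx : 0 < x) (hy : 0 ≤ y) :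
    qI α t x y = (y / x) ^ (α / 2) *
      ∫ z in Set.Ioi (0 : ℝ),
        Real.exp (-2 * t * z) * Jb α (2 * Real.sqrt (z * x)) * Jb α (2 * Real.sqrt (z * y)) := by
  have hp : 0 < 2 * t := by positivity
  let F : ℕ × ℕ → ℝ → ℝ := fun q z =>
    z ^ (((q.1 : ℝ) + q.2 + α + 1) - 1) * Real.exp (-(2 * t * z)) *
      (((-x) ^ q.1 / ((q.1.factorial : ℝ) * Real.Gamma ((q.1 : ℝ) + α + 1))) *
       ((-y) ^ q.2 / ((q.2.factorial : ℝ) * Real.Gamma ((q.2 : ℝ) + α + 1))))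
  have hFi : ∀ q, Integrable (F q) (volume.restrict (Set.Ioi 0)) := fun q =>
    (gam_int ((q.1 : ℝ) + q.2 + α + 1) (2 * t) (by positivity) hp).mul_const _
  have hFint : ∀ q, ∫ z in Set.Ioi (0:ℝ), F q z =
      (1 / (2 * t)) ^ (α + 1) * TT α (-x / (2 * t)) (-y / (2 * t)) q := by
    intro q
    rw [integral_mul_const, Real.integral_rpow_mul_exp_neg_mul_Ioi (by positivity) hp,
      TT_scale α _ _ _ hp]
  have hFn : ∀ q, ∫ z in Set.Ioi (0:ℝ), ‖F q z‖ =
      (1 / (2 * t)) ^ (α + 1) * TT α (x / (2 * t)) (y / (2 * t)) q := by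
    intro q
    rw [← TT_scale α _ _ _ hp, ← Real.integral_rpow_mul_exp_neg_mul_Ioi (by positivity) hp,
      ← integral_mul_const]
    refine setIntegral_congr_fun measurableSet_Ioi fun z hz => ?_
    have hz' : 0 < z := hz
    have g1 := Gpos α hα q.1
    have g2 := Gpos α hα q.2
    simp only [F, norm_mul, norm_div, norm_pow, norm_neg]
    rw [Real.norm_of_nonneg hx.le, Real.norm_of_nonneg hy, Real.norm_of_nonneg g1.le,
      Real.norm_of_nonneg g2.le, Real.norm_of_nonneg (Real.exp_pos _).le,
      Real.norm_of_nonneg (Real.rpow_nonneg hz'.le _), Real.norm_natCast, Real.norm_natCast]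
  have hsum := hasSum_integral_of_summable_integral_norm hFi (by
    simp only [hFn]
    exact (TT_hasSum α hα _ _).summable.mul_left _)
  simp only [hFint] at hsum
  have hval := hsum.unique ((TT_hasSum α hα (-x / (2 * t)) (-y / (2 * t))).mul_left _)
  have hI : ∫ z in Set.Ioi (0 : ℝ),
        Real.exp (-2 * t * z) * Jb α (2 * Real.sqrt (z * x)) * Jb α (2 * Real.sqrt (z * y))
      = (Real.sqrt x ^ α * Real.sqrt y ^ α) * ∫ z in Set.Ioi (0 : ℝ), ∑' q, F q z := by
    rw [← integral_const_mul]
    refine setIntegral_congr_fun measurableSet_Ioi fun z hz => ?_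
    have hz' : 0 < z := hz
    have hs : Real.sqrt z ^ α * Real.sqrt z ^ α = z ^ α := by
      rw [← Real.mul_rpow (Real.sqrt_nonneg _) (Real.sqrt_nonneg _), Real.mul_self_sqrt hz'.le]
    rw [Jb_eq α hα _ (by positivity), Jb_eq α hα _ (by positivity), Real.sqrt_mul hz'.le,
      Real.sqrt_mul hz'.le, Real.mul_rpow (Real.sqrt_nonneg _) (Real.sqrt_nonneg _),
      Real.mul_rpow (Real.sqrt_nonneg _) (Real.sqrt_nonneg _)]
    have hF : ∑' q, F q z = Real.exp (-2 * t * z) * z ^ α *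
        ((∑' n : ℕ, (-(z * x)) ^ n / ((n.factorial : ℝ) * Real.Gamma ((n : ℝ) + α + 1))) *
         (∑' n : ℕ, (-(z * y)) ^ n / ((n.factorial : ℝ) * Real.Gamma ((n : ℝ) + α + 1)))) := by
      rw [tsum_mul_tsum_of_summable_norm (summ_norm α hα _) (summ_norm α hα _), ← tsum_mul_left]
      congr 1; ext q
      simp only [F]
      rw [add_sub_cancel_right, Real.rpow_add hz', Real.rpow_add hz', Real.rpow_natCast,
        Real.rpow_natCast, ← mul_neg z x, ← mul_neg z y, mul_pow, mul_pow,
        show -(2 * t * z) = -2 * t * z by ring]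
      ring
    rw [hF, ← hs]
    ring
  rw [hI, hval, qI, Ib_eq α hα t ht x y hx.le hy,
    show -x / (2 * t) + -y / (2 * t) = -(x + y) / (2 * t) by ring,
    Real.rpow_add (by positivity), Real.rpow_one]
  ring
end

section
/- Fix α ≥ 0. For every ε > 0 there exists L > 0 such that for all x ∈ [0,∞) and all M ≥ 1, M^{-1} ∑_{j : |j/M − x| ≥ L} p_1(x, j/M) ≤ ε. -/
/-- `h_α(z) = 2^{-α} ∑_{n≥0} (z/2)^{2n}/(n! Γ(n+α+1))`. -/
noncomputable def hA (α z : ℝ) : ℝ :=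
  (2 : ℝ) ^ (-α) * ∑' n : ℕ, (z / 2) ^ (2 * n) / ((n.factorial : ℝ) * Real.Gamma ((n : ℝ) + α + 1))

/-- The index-`α` Bessel transition density at time 1:
`p_1(x,y) = y^{2α+1} e^{-(x²+y²)/2} h_α(xy)`. -/
noncomputable def p1 (α x y : ℝ) : ℝ :=
  y ^ (2 * α + 1) * Real.exp (-(x ^ 2 + y ^ 2) / 2) * hA α (x * y)

open Real in
lemma cb_bound (n : ℕ) : (n.centralBinom : ℝ) ^ 2 * (2 * n + 1) ≤ 16 ^ n := by
  induction n with
  | zero => simp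
  | succ k ih =>
    have h := Nat.succ_mul_centralBinom_succ k
    have h' : ((k : ℝ) + 1) * ((k + 1).centralBinom : ℝ) = 2 * (2 * k + 1) * (k.centralBinom : ℝ) := by
      exact_mod_cast h
    have hk : (0 : ℝ) < (k : ℝ) + 1 := by positivity
    have h2 : (((k + 1).centralBinom : ℕ) : ℝ) = 2 * (2 * k + 1) * (k.centralBinom : ℝ) / (k + 1) := by
      field_simp
      linarith
    rw [h2, pow_succ (16 : ℝ), div_pow, div_mul_eq_mul_div, div_le_iff₀ (by positivity)]
    push_cast
    have hk0 : (0 : ℝ) ≤ k := by positivity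
    calc (2 * (2 * (k : ℝ) + 1) * (k.centralBinom : ℝ)) ^ 2 * (2 * (k + 1) + 1)
        = ((k.centralBinom : ℝ) ^ 2 * (2 * (k : ℝ) + 1)) * (4 * (2 * k + 1) * (2 * k + 3)) := by ring
      _ ≤ (16 : ℝ) ^ k * (4 * (2 * k + 1) * (2 * k + 3)) := by gcongr
      _ ≤ (16 : ℝ) ^ k * (16 * ((k : ℝ) + 1) ^ 2) := by
          refine mul_le_mul_of_nonneg_left ?_ (by positivity)
          nlinarith
      _ = _ := by ring

lemma gamma_lower (α : ℝ) (hα : 0 ≤ α) :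
    ∃ c > 0, ∀ n : ℕ, c * ((n.factorial : ℝ) * ((n : ℝ) + 1) ^ α) ≤ Real.Gamma ((n : ℝ) + α + 1) := by
  rcases hα.eq_or_lt with h0 | hpos
  · subst h0
    refine ⟨1, one_pos, fun n => ?_⟩
    simp [Real.Gamma_nat_eq_factorial]
  have hG : 0 < Real.Gamma (α + 1) := Real.Gamma_pos_of_pos (by linarith)
  refine ⟨min (Real.Gamma (α + 1)) ((2 : ℝ) ^ (-α)), by positivity, fun n => ?_⟩
  rcases Nat.eq_zero_or_pos n with rfl | hn
  · simp
  have hn1 : (1 : ℝ) ≤ n := by exact_mod_cast hn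
  have key := Real.BohrMollerup.f_add_nat_ge (f := Real.log ∘ Real.Gamma) (n := n + 1) (x := α)
    Real.convexOn_log_Gamma (fun {y} hy => by
      rw [Function.comp_apply, Function.comp_apply, Real.Gamma_add_one hy.ne',
        Real.log_mul hy.ne' (Real.Gamma_pos_of_pos hy).ne', add_comm]) (by omega) hpos
  simp only [Function.comp_apply] at key
  push_cast at key
  have hg : 0 < Real.Gamma ((n : ℝ) + α + 1) := Real.Gamma_pos_of_pos (by positivity)
  have e1 : (n : ℝ) + 1 + α = n + α + 1 := by ring
  rw [Real.Gamma_nat_eq_factorial, e1, add_sub_cancel_right] at key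
  have hf : (0 : ℝ) < n.factorial := by positivity
  have k2 : (n.factorial : ℝ) * (n : ℝ) ^ α ≤ Real.Gamma ((n : ℝ) + α + 1) := by
    rw [← Real.log_le_log_iff (by positivity) hg, Real.log_mul hf.ne' (by positivity),
      Real.log_rpow (by positivity)]
    exact key
  have k3 : (2 : ℝ) ^ (-α) * ((n : ℝ) + 1) ^ α ≤ (n : ℝ) ^ α := by
    rw [Real.rpow_neg (by norm_num), ← div_eq_inv_mul, ← Real.div_rpow (by positivity) (by norm_num)]
    apply Real.rpow_le_rpow (by positivity) _ hα
    linarith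
  calc _ ≤ (2 : ℝ) ^ (-α) * ((n.factorial : ℝ) * ((n : ℝ) + 1) ^ α) := by
        gcongr
        exact min_le_right _ _
    _ = n.factorial * ((2 : ℝ) ^ (-α) * ((n : ℝ) + 1) ^ α) := by ring
    _ ≤ n.factorial * (n : ℝ) ^ α := by gcongr
    _ ≤ _ := k2

lemma fact_lower (n : ℕ) : ((2 * n).factorial : ℝ) * ((n : ℝ) + 1) ^ (1 / 2 : ℝ) ≤
    4 ^ n * (n.factorial : ℝ) ^ 2 := by
  have h1 : ((2 * n).factorial : ℝ) = n.centralBinom * (n.factorial : ℝ) ^ 2 := by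
    have := Nat.choose_mul_factorial_mul_factorial (show n ≤ 2 * n by omega)
    rw [show 2 * n - n = n by omega] at this
    rw [Nat.centralBinom, ← this]; push_cast; ring
  have h2 : (n.centralBinom : ℝ) * ((n : ℝ) + 1) ^ (1 / 2 : ℝ) ≤ 4 ^ n := by
    apply le_of_sq_le_sq _ (by positivity)
    rw [mul_pow, ← Real.sqrt_eq_rpow, Real.sq_sqrt (by positivity), ← pow_mul, mul_comm n 2, pow_mul]
    have := cb_bound n
    norm_num
    refine le_trans ?_ this
    gcongr
    have : (0 : ℝ) ≤ n := by positivity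
    linarith
  rw [h1]
  calc _ = ((n.centralBinom : ℝ) * ((n : ℝ) + 1) ^ (1 / 2 : ℝ)) * (n.factorial : ℝ) ^ 2 := by ring
    _ ≤ _ := by gcongr

lemma coef_bound (α : ℝ) (hα : 0 ≤ α) : ∃ C > 0, ∀ n : ℕ,
    (4 ^ n * ((n.factorial : ℝ) * Real.Gamma ((n : ℝ) + α + 1)))⁻¹ ≤
      C / ((2 * n).factorial * ((n : ℝ) + 1) ^ (α + 1 / 2)) := by
  obtain ⟨c, hc, h⟩ := gamma_lower α hα
  refine ⟨c⁻¹, by positivity, fun n => ?_⟩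
  have hpos : (0 : ℝ) < (n : ℝ) + 1 := by positivity
  rw [div_eq_mul_inv, ← mul_inv]
  apply inv_anti₀ (by positivity)
  rw [Real.rpow_add hpos]
  calc _ = c * ((n : ℝ) + 1) ^ α * (((2 * n).factorial : ℝ) * ((n : ℝ) + 1) ^ (1 / 2 : ℝ)) := by ring
    _ ≤ c * ((n : ℝ) + 1) ^ α * (4 ^ n * (n.factorial : ℝ) ^ 2) := by
        gcongr ?_ * ?_
        exact fact_lower n
    _ = 4 ^ n * (n.factorial * (c * ((n.factorial : ℝ) * ((n : ℝ) + 1) ^ α))) := by ring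
    _ ≤ _ := by
        gcongr
        exact h n

lemma exp_sub (z : ℝ) (hz : 0 ≤ z) (m : ℕ) :
    Summable (fun n : ℕ => z ^ (2 * n + m) / ((2 * n + m).factorial : ℝ)) ∧
    ∑' n : ℕ, z ^ (2 * n + m) / ((2 * n + m).factorial : ℝ) ≤ Real.exp z := by
  have hs := Real.summable_pow_div_factorial z
  have hinj : Function.Injective (fun n : ℕ => 2 * n + m) := fun a b h => by
    simp only at h; omega
  refine ⟨hs.comp_injective hinj, ?_⟩
  rw [Real.exp_eq_exp_ℝ, NormedSpace.exp_eq_tsum_div]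
  exact (hs.comp_injective hinj).tsum_le_tsum_of_inj _ hinj (fun c _ => by positivity) (fun n => le_rfl) hs

lemma h_bound (α : ℝ) (hα : 0 ≤ α) : ∃ C > 0, ∀ z : ℝ, 0 ≤ z →
    hA α z * (1 + z) ^ (α + 1 / 2) ≤ C * Real.exp z := by
  obtain ⟨C, hC, h⟩ := coef_bound α hα
  set m := ⌈α + 1 / 2⌉₊ with hm
  have hmβ : α + 1 / 2 ≤ m := Nat.le_ceil _
  refine ⟨(2 : ℝ) ^ (-α) * (C * 2 ^ (m - 1) * (1 + ((m : ℝ) + 2) ^ m)), by positivity, fun z hz => ?_⟩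
  obtain ⟨s0, t0⟩ := exp_sub z hz 0
  obtain ⟨sm, tm⟩ := exp_sub z hz m
  simp only [add_zero] at s0 t0
  have term : ∀ n : ℕ, (z / 2) ^ (2 * n) / ((n.factorial : ℝ) * Real.Gamma ((n : ℝ) + α + 1)) *
      (1 + z) ^ (α + 1 / 2) ≤ C * 2 ^ (m - 1) * (z ^ (2 * n) / ((2 * n).factorial : ℝ) +
        ((m : ℝ) + 2) ^ m * (z ^ (2 * n + m) / ((2 * n + m).factorial : ℝ))) := by
    intro n
    have hn : (0 : ℝ) < (n : ℝ) + 1 := by positivity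
    have w1 : ((1 + z) / ((n : ℝ) + 1)) ^ (α + 1 / 2) ≤ 2 ^ (m - 1) * (1 + (z / ((n : ℝ) + 1)) ^ m) := by
      have hw : 0 ≤ z / ((n : ℝ) + 1) := by positivity
      calc ((1 + z) / ((n : ℝ) + 1)) ^ (α + 1 / 2) ≤ (1 + z / ((n : ℝ) + 1)) ^ (α + 1 / 2) := by
            apply Real.rpow_le_rpow (by positivity) _ (by positivity)
            rw [add_div]
            gcongr
            rw [div_le_one hn]
            linarith [show (0 : ℝ) ≤ n by positivity]
        _ ≤ (1 + z / ((n : ℝ) + 1)) ^ (m : ℝ) :=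
            Real.rpow_le_rpow_of_exponent_le (by linarith) hmβ
        _ = (1 + z / ((n : ℝ) + 1)) ^ m := Real.rpow_natCast _ _
        _ ≤ _ := by
            have := add_pow_le (zero_le_one' ℝ) hw m
            simpa using this
    have w2 : (z / ((n : ℝ) + 1)) ^ m / ((2 * n).factorial : ℝ) ≤
        ((m : ℝ) + 2) ^ m * (z ^ m / ((2 * n + m).factorial : ℝ)) := by
      have f1 : ((2 * n + m).factorial : ℝ) ≤ ((2 * n).factorial : ℝ) * (((m : ℝ) + 2) * (n + 1)) ^ m := by
        have b : (2 * n + m).factorial ≤ (2 * n).factorial * (2 * n + m) ^ m := by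
          rw [← Nat.factorial_mul_ascFactorial]
          exact Nat.mul_le_mul_left _ (Nat.ascFactorial_le_pow_add _ _)
        have b' : ((2 * n + m).factorial : ℝ) ≤ ((2 * n).factorial : ℝ) * ((2 * n + m : ℕ) : ℝ) ^ m := by
          exact_mod_cast b
        refine b'.trans ?_
        gcongr
        push_cast
        nlinarith [show (0 : ℝ) ≤ (n : ℝ) * m by positivity]
      rw [div_pow, div_div, ← mul_div_assoc, div_le_div_iff₀ (by positivity) (by positivity)]
      calc z ^ m * ((2 * n + m).factorial : ℝ) ≤ z ^ m * (((2 * n).factorial : ℝ) * (((m : ℝ) + 2) * (n + 1)) ^ m) := by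
            gcongr
        _ = _ := by rw [mul_pow]; ring
    have e : (z / 2) ^ (2 * n) / ((n.factorial : ℝ) * Real.Gamma ((n : ℝ) + α + 1)) =
        z ^ (2 * n) * (4 ^ n * ((n.factorial : ℝ) * Real.Gamma ((n : ℝ) + α + 1)))⁻¹ := by
      rw [div_pow, pow_mul 2, div_div, div_eq_mul_inv]; norm_num
    rw [e]
    calc _ ≤ z ^ (2 * n) * (C / ((2 * n).factorial * ((n : ℝ) + 1) ^ (α + 1 / 2))) * (1 + z) ^ (α + 1 / 2) := by
          gcongr
          exact h n
      _ = C * z ^ (2 * n) / (2 * n).factorial * ((1 + z) / ((n : ℝ) + 1)) ^ (α + 1 / 2) := by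
          rw [Real.div_rpow (by positivity) hn.le]
          field_simp
      _ ≤ C * z ^ (2 * n) / (2 * n).factorial * (2 ^ (m - 1) * (1 + (z / ((n : ℝ) + 1)) ^ m)) := by
          gcongr
      _ = C * 2 ^ (m - 1) * (z ^ (2 * n) / ((2 * n).factorial : ℝ) +
            z ^ (2 * n) * ((z / ((n : ℝ) + 1)) ^ m / ((2 * n).factorial : ℝ))) := by ring
      _ ≤ C * 2 ^ (m - 1) * (z ^ (2 * n) / ((2 * n).factorial : ℝ) +
            z ^ (2 * n) * (((m : ℝ) + 2) ^ m * (z ^ m / ((2 * n + m).factorial : ℝ)))) := by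
          gcongr
      _ = _ := by rw [pow_add]; ring
  have hnn : ∀ n : ℕ, 0 ≤ (z / 2) ^ (2 * n) / ((n.factorial : ℝ) * Real.Gamma ((n : ℝ) + α + 1)) *
      (1 + z) ^ (α + 1 / 2) := by
    intro n
    have : 0 < Real.Gamma ((n : ℝ) + α + 1) := Real.Gamma_pos_of_pos (by positivity)
    positivity
  have sR := (s0.add (sm.mul_left (((m : ℝ) + 2) ^ m))).mul_left (C * 2 ^ (m - 1))
  have sL := Summable.of_nonneg_of_le hnn term sR
  have T := sL.tsum_le_tsum term sR
  rw [tsum_mul_left, s0.tsum_add (sm.mul_left _), tsum_mul_left, tsum_mul_right] at T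
  unfold hA
  rw [mul_assoc, mul_assoc]
  refine mul_le_mul_of_nonneg_left (T.trans ?_) (by positivity)
  calc _ ≤ C * 2 ^ (m - 1) * (Real.exp z + ((m : ℝ) + 2) ^ m * Real.exp z) := by gcongr
    _ = _ := by ring

lemma hA_nonneg (α z : ℝ) (hα : 0 ≤ α) (hz : 0 ≤ z) : 0 ≤ hA α z := by
  unfold hA
  refine mul_nonneg (by positivity) (tsum_nonneg fun n => ?_)
  have : 0 < Real.Gamma ((n : ℝ) + α + 1) := Real.Gamma_pos_of_pos (by positivity)
  positivity

lemma p1_bound (α : ℝ) (hα : 0 ≤ α) : ∃ C > 0, ∀ x y : ℝ, 0 ≤ x → 0 ≤ y →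
    p1 α x y ≤ C / (1 + (y - x) ^ 2) ^ 2 := by
  obtain ⟨C, hC, h⟩ := h_bound α hα
  set k := ⌈α + 1 / 2⌉₊ with hk
  have hkβ : α + 1 / 2 ≤ k := Nat.le_ceil _
  refine ⟨C * 2 ^ k * (2 ^ (k + 2) * (k + 2).factorial * Real.exp (1 / 2)), by positivity,
    fun x y hx hy => ?_⟩
  have hz : 0 ≤ x * y := by positivity
  have hh := h _ hz
  set t := 1 + (y - x) ^ 2 with ht
  have ht1 : 1 ≤ t := by nlinarith [sq_nonneg (y - x)]
  have hH := hA_nonneg α _ hα hz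
  have y1 : y ^ (2 * α + 1) ≤ 2 ^ k * t ^ k * (1 + x * y) ^ (α + 1 / 2) := by
    have a : y ^ (2 * α + 1) = (y ^ 2) ^ (α + 1 / 2) := by
      rw [← Real.rpow_natCast, ← Real.rpow_mul hy]; congr 1; push_cast; ring
    have b : y ^ 2 ≤ (2 * t) * (1 + x * y) := by
      rw [ht]
      nlinarith [mul_nonneg (sq_nonneg (y - x)) hz, sq_nonneg (y - x), sq_nonneg x]
    rw [a]
    calc _ ≤ ((2 * t) * (1 + x * y)) ^ (α + 1 / 2) := Real.rpow_le_rpow (by positivity) b (by positivity)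
      _ = (2 * t) ^ (α + 1 / 2) * (1 + x * y) ^ (α + 1 / 2) :=
          Real.mul_rpow (by positivity) (by positivity)
      _ ≤ (2 * t) ^ (k : ℝ) * (1 + x * y) ^ (α + 1 / 2) := by
          gcongr
          linarith
      _ = _ := by rw [Real.rpow_natCast, mul_pow]
  have e1 : t ^ (k + 2) ≤ 2 ^ (k + 2) * (k + 2).factorial * Real.exp (t / 2) := by
    have := Real.pow_div_factorial_le_exp (t / 2) (by positivity) (k + 2)
    rw [div_pow, div_div, div_le_iff₀ (by positivity)] at this
    linarith
  rw [le_div_iff₀ (by positivity)]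
  unfold p1
  calc y ^ (2 * α + 1) * Real.exp (-(x ^ 2 + y ^ 2) / 2) * hA α (x * y) * t ^ 2
      ≤ 2 ^ k * t ^ k * (1 + x * y) ^ (α + 1 / 2) * Real.exp (-(x ^ 2 + y ^ 2) / 2) * hA α (x * y) * t ^ 2 := by
        gcongr
    _ = 2 ^ k * t ^ (k + 2) * Real.exp (-(x ^ 2 + y ^ 2) / 2) * (hA α (x * y) * (1 + x * y) ^ (α + 1 / 2)) := by
        ring
    _ ≤ 2 ^ k * t ^ (k + 2) * Real.exp (-(x ^ 2 + y ^ 2) / 2) * (C * Real.exp (x * y)) := by gcongr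
    _ = C * 2 ^ k * (t ^ (k + 2) * (Real.exp (-(x ^ 2 + y ^ 2) / 2) * Real.exp (x * y))) := by ring
    _ ≤ C * 2 ^ k * ((2 ^ (k + 2) * (k + 2).factorial * Real.exp (t / 2)) *
          (Real.exp (-(x ^ 2 + y ^ 2) / 2) * Real.exp (x * y))) := by gcongr
    _ = C * 2 ^ k * (2 ^ (k + 2) * (k + 2).factorial *
          (Real.exp (t / 2) * (Real.exp (-(x ^ 2 + y ^ 2) / 2) * Real.exp (x * y)))) := by ring
    _ = _ := by
        rw [← Real.exp_add, ← Real.exp_add]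
        congr 3
        rw [ht]; ring_nf

lemma arctan_step (u δ : ℝ) (h0 : 0 < δ) (h1 : δ ≤ 1) :
    δ * (1 + u ^ 2)⁻¹ ≤ 3 * (Real.arctan (u + δ) - Real.arctan u) := by
  obtain ⟨c, ⟨hc1, hc2⟩, hc⟩ := exists_hasDerivAt_eq_slope Real.arctan (fun x => 1 / (1 + x ^ 2))
    (show u < u + δ by linarith) Real.continuous_arctan.continuousOn
    (fun x _ => Real.hasDerivAt_arctan x)
  rw [add_sub_cancel_left, eq_div_iff h0.ne'] at hc
  rw [← hc]
  have : (1 + u ^ 2)⁻¹ ≤ 3 * (1 / (1 + c ^ 2)) := by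
    rw [mul_one_div, inv_eq_one_div, div_le_div_iff₀ (by positivity) (by positivity)]
    nlinarith [sq_nonneg (2 * u - c), sq_nonneg (u - 1), sq_nonneg (c - 2 * u), sq_nonneg (u + 1), mul_nonneg (sub_nonneg.2 hc1.le) (sub_nonneg.2 hc2.le), mul_nonneg (sub_nonneg.2 hc1.le) (show 0 ≤ u + 1 - c by linarith)]
  calc _ ≤ δ * (3 * (1 / (1 + c ^ 2))) := by gcongr
    _ = _ := by ring

lemma riemann (x M : ℝ) (hM : 1 ≤ M) (N : ℕ) :
    ∑ j ∈ Finset.range N, M⁻¹ * (1 + ((j : ℝ) / M - x) ^ 2)⁻¹ ≤ 3 * Real.pi := by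
  have hM0 : 0 < M := by linarith
  calc _ ≤ ∑ j ∈ Finset.range N, (3 * Real.arctan (((j + 1 : ℕ) : ℝ) / M - x) - 3 * Real.arctan ((j : ℝ) / M - x)) := by
        apply Finset.sum_le_sum
        intro j _
        have := arctan_step ((j : ℝ) / M - x) M⁻¹ (by positivity) (inv_le_one_of_one_le₀ hM)
        have e : ((j + 1 : ℕ) : ℝ) / M - x = (j : ℝ) / M - x + M⁻¹ := by
          push_cast; field_simp; ring
        rw [e]; linarith
    _ = 3 * Real.arctan ((N : ℝ) / M - x) - 3 * Real.arctan (((0 : ℕ) : ℝ) / M - x) :=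
        Finset.sum_range_sub (fun j : ℕ => 3 * Real.arctan ((j : ℝ) / M - x)) N
    _ ≤ _ := by
        have a := Real.arctan_lt_pi_div_two ((N : ℝ) / M - x)
        have b := Real.neg_pi_div_two_lt_arctan (((0 : ℕ) : ℝ) / M - x)
        linarith

/-- For `α ≥ 0` and every `ε > 0` there is `L > 0` such that for all `x ≥ 0`
and `M ≥ 1`, `M⁻¹ ∑_{j : |j/M − x| ≥ L} p_1(x, j/M) ≤ ε`. -/
theorem stmt10 (α : ℝ) (hα : 0 ≤ α) (ε : ℝ) (hε : 0 < ε) :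
    ∃ L > 0, ∀ x M : ℝ, 0 ≤ x → 1 ≤ M →
      M⁻¹ * ∑' j : ℕ, (if L ≤ |(j : ℝ) / M - x| then p1 α x ((j : ℝ) / M) else 0) ≤ ε := by
  obtain ⟨C, hC, h⟩ := p1_bound α hα
  set K := C * (3 * Real.pi) / ε with hK
  have hKpos : 0 < K := by have := Real.pi_pos; positivity
  refine ⟨K + 1, by positivity, fun x M hx hM => ?_⟩
  have hM0 : 0 < M := by linarith
  rw [← tsum_mul_left]
  apply Real.tsum_le_of_sum_range_le
  · intro j
    split_ifs
    · have : 0 ≤ hA α (x * ((j : ℝ) / M)) := hA_nonneg _ _ hα (by positivity)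
      unfold p1
      positivity
    · simp
  intro N
  calc _ ≤ ∑ j ∈ Finset.range N, C / K * (M⁻¹ * (1 + ((j : ℝ) / M - x) ^ 2)⁻¹) := by
        apply Finset.sum_le_sum
        intro j _
        split_ifs with hL
        · have b := h x ((j : ℝ) / M) hx (by positivity)
          set d := (j : ℝ) / M - x
          have hd : K ≤ 1 + d ^ 2 := by
            rw [← sq_abs]
            nlinarith
          calc _ ≤ M⁻¹ * (C / (1 + d ^ 2) ^ 2) := by gcongr
            _ = C / (1 + d ^ 2) * (M⁻¹ * (1 + d ^ 2)⁻¹) := by field_simp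
            _ ≤ _ := by gcongr
        · rw [mul_zero]; positivity
    _ = C / K * ∑ j ∈ Finset.range N, (M⁻¹ * (1 + ((j : ℝ) / M - x) ^ 2)⁻¹) := by rw [Finset.mul_sum]
    _ ≤ C / K * (3 * Real.pi) := by
        gcongr
        exact riemann x M hM N
    _ = ε := by
        have := Real.pi_pos
        rw [hK]; field_simp
end
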